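/- arXiv:2308.11420 — 2 statements merged into one kernel-verified Lean document; each statement's English description precedes it below -/
import Mathlib

section
/- Let N ≥ 1, K > 0, and for each n = 1,…,N let c_n : ℝ → ℝ be convex, strictly increasing and differentiable on [0, ∞), and let ĉ_n(s) = (1 + s/K)·c_n(s) − (1/K)·∫₀^s c_n(x) dx. Let F ⊆ [0, ∞)^N be a convex set. If s and s′ both minimize the total modified cost ∑_{n=1}^N ĉ_n(s_n) over F, then s = s′. -/
/-!
Write `P(s) = s c(s) - ∫₀ˢ c`, so that `ĉ = c + P / K`. It suffices that `P` is strictly convex,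
since then so are `ĉ` and the separable total cost, and a strictly convex function has at most one
minimizer on a convex set.

For `x < y < z` let `ℓ` be the secant line of `c` through `y` and `z`, of slope `m > 0`. By
convexity `c ≤ ℓ` on `[y, z]` and `ℓ ≤ c` on `[x, y]`, and these inequalities show that `P` grows
from `y` to `z` at least, and from `x` to `y` at most, as much as the corresponding function of `ℓ`,
which is `m s² / 2`. Hence the slope of `P` is at most `m (x + y) / 2` on `[x, y]` and at least
`m (y + z) / 2` on `[y, z]`.
-/

open MeasureTheory Set

theorem strictConvexOn_const_smul {𝕜 E β : Type*} [CommSemiring 𝕜] [PartialOrder 𝕜]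
    [AddCommMonoid E] [SMul 𝕜 E] [AddCommMonoid β] [PartialOrder β] [Module 𝕜 β]
    [PosSMulStrictMono 𝕜 β] {S : Set E} {f : E → β} {k : 𝕜} (hk : 0 < k)
    (hf : StrictConvexOn 𝕜 S f) : StrictConvexOn 𝕜 S fun x ↦ k • f x := by
  refine ⟨hf.1, fun x hx y hy hxy a b ha hb hab ↦ ?_⟩
  calc k • f (a • x + b • y)
      < k • (a • f x + b • f y) := smul_lt_smul_of_pos_left (hf.2 hx hy hxy ha hb hab) hk
    _ = a • k • f x + b • k • f y := by rw [smul_add, smul_comm k a, smul_comm k b]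

theorem strictConvexOn_sum_apply {𝕜 ι β : Type*} {E : ι → Type*} [Fintype ι]
    [Semiring 𝕜] [PartialOrder 𝕜] [AddCommMonoid β] [PartialOrder β] [IsOrderedCancelAddMonoid β]
    [Module 𝕜 β] [∀ i, AddCommMonoid (E i)] [∀ i, Module 𝕜 (E i)]
    {S : ∀ i, Set (E i)} {f : ∀ i, E i → β} (hf : ∀ i, StrictConvexOn 𝕜 (S i) (f i)) :
    StrictConvexOn 𝕜 (univ.pi S) fun x ↦ ∑ i, f i (x i) := by
  refine ⟨convex_pi fun i _ ↦ (hf i).1, fun x hx y hy hxy a b ha hb hab ↦ ?_⟩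
  obtain ⟨j, hj⟩ := Function.ne_iff.1 hxy
  have hlt {i : ι} (hi : x i ≠ y i) :
      f i (a • x i + b • y i) < a • f i (x i) + b • f i (y i) :=
    (hf i).2 (hx i (mem_univ i)) (hy i (mem_univ i)) hi ha hb hab
  have hle (i : ι) : f i (a • x i + b • y i) ≤ a • f i (x i) + b • f i (y i) := by
    obtain hi | hi := eq_or_ne (x i) (y i)
    · rw [hi, Convex.combo_self hab, Convex.combo_self hab]
    · exact (hlt hi).le
  calc ∑ i, f i (a • x i + b • y i)
      < ∑ i, (a • f i (x i) + b • f i (y i)) :=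
        Finset.sum_lt_sum (fun i _ ↦ hle i) ⟨j, Finset.mem_univ j, hlt hj⟩
    _ = a • ∑ i, f i (x i) + b • ∑ i, f i (y i) := by
        rw [Finset.sum_add_distrib, Finset.smul_sum, Finset.smul_sum]

/-- The line through the points of the graph of `f` above `a` and `b`, against which a convex `f`
is compared. For `a = b` it is the horizontal line through the point above `a`. -/
noncomputable def secantLine (f : ℝ → ℝ) (a b t : ℝ) : ℝ :=
  f a + slope f a b * (t - a)

section SecantLine

variable {f : ℝ → ℝ} {S : Set ℝ} {a b t : ℝ}

lemma secantLine_left (f : ℝ → ℝ) (a b : ℝ) : secantLine f a b a = f a := by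
  simp [secantLine]

lemma secantLine_right (f : ℝ → ℝ) (a b : ℝ) : secantLine f a b b = f b := by
  rw [secantLine, mul_comm, ← smul_eq_mul, sub_smul_slope, vsub_eq_sub, add_sub_cancel]

lemma continuous_secantLine (f : ℝ → ℝ) (a b : ℝ) : Continuous (secantLine f a b) := by
  unfold secantLine
  fun_prop

lemma le_secantLine_of_convexOn (hf : ConvexOn ℝ S f) (ha : a ∈ S) (hb : b ∈ S)
    (ht : t ∈ Icc a b) : f t ≤ secantLine f a b t := by
  obtain rfl | hat := ht.1.eq_or_lt
  · exact (secantLine_left f a b).ge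
  have htS : t ∈ S := hf.1.ordConnected.out ha hb ht
  have hslope : slope f a t ≤ slope f a b :=
    hf.slope_mono ha ⟨htS, hat.ne'⟩ ⟨hb, (hat.trans_le ht.2).ne'⟩ ht.2
  rw [slope_def_field, div_le_iff₀ (sub_pos.2 hat)] at hslope
  rw [secantLine]
  linarith

lemma secantLine_le_of_convexOn (hf : ConvexOn ℝ S f) (ht : t ∈ S) (hb : b ∈ S)
    (hta : t ≤ a) (hab : a < b) : secantLine f a b t ≤ f t := by
  obtain rfl | hta := hta.eq_or_lt
  · exact (secantLine_left f t b).le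
  have ha : a ∈ S := hf.1.ordConnected.out ht hb ⟨hta.le, hab.le⟩
  have hslope : slope f a t ≤ slope f a b :=
    hf.slope_mono ha ⟨ht, hta.ne⟩ ⟨hb, hab.ne'⟩ (hta.trans hab).le
  rw [slope_def_field, div_le_iff_of_neg (sub_neg.2 hta)] at hslope
  rw [secantLine]
  linarith

end SecantLine

/-- The area `s * c s - ∫₀ˢ c` to the left of the graph of `c` up to height `c s`: the producer
surplus at supply `s` when `c` is read as an inverse supply curve. -/
noncomputable def surplus (c : ℝ → ℝ) (s : ℝ) : ℝ :=
  s * c s - ∫ x in (0 : ℝ)..s, c x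

section Surplus

variable {c f g : ℝ → ℝ} {S : Set ℝ} {x y : ℝ}

lemma surplus_secantLine (f : ℝ → ℝ) (a b s : ℝ) :
    surplus (secantLine f a b) s = slope f a b * s ^ 2 / 2 := by
  have hintegral : ∫ t in (0 : ℝ)..s, secantLine f a b t =
      f a * s + slope f a b * (s ^ 2 / 2 - a * s) := by
    have hline : Continuous fun t ↦ slope f a b * (t - a) := by fun_prop
    simp only [secantLine]
    rw [intervalIntegral.integral_add intervalIntegrable_const (hline.intervalIntegrable 0 s),
      intervalIntegral.integral_const_mul,
      intervalIntegral.integral_sub intervalIntegral.intervalIntegrable_id intervalIntegrable_const,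
      integral_id, intervalIntegral.integral_const, intervalIntegral.integral_const,
      smul_eq_mul, smul_eq_mul]
    ring
  rw [surplus, hintegral, secantLine]
  ring

lemma slope_surplus_secantLine (hxy : x ≠ y) (f : ℝ → ℝ) (a b : ℝ) :
    slope (surplus (secantLine f a b)) x y = slope f a b * ((x + y) / 2) := by
  rw [slope_def_field, surplus_secantLine, surplus_secantLine, div_eq_iff (sub_ne_zero.2 hxy.symm)]
  ring

lemma surplus_sub_surplus (hx : IntervalIntegrable c volume 0 x)
    (hy : IntervalIntegrable c volume 0 y) :
    surplus c y - surplus c x = y * c y - x * c x - ∫ t in x..y, c t := by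
  rw [← intervalIntegral.integral_interval_sub_left hy hx, surplus, surplus]
  ring

lemma surplus_sub_surplus_le_of_le (hx0 : 0 ≤ x) (hxy : x ≤ y)
    (hfx : IntervalIntegrable f volume 0 x) (hfy : IntervalIntegrable f volume 0 y)
    (hgx : IntervalIntegrable g volume 0 x) (hgy : IntervalIntegrable g volume 0 y)
    (hfg : ∀ t ∈ Icc x y, f t ≤ g t) (hfg_right : f y = g y) :
    surplus g y - surplus g x ≤ surplus f y - surplus f x := by
  have hintegral : ∫ t in x..y, f t ≤ ∫ t in x..y, g t :=
    intervalIntegral.integral_mono_on hxy (hfx.symm.trans hfy) (hgx.symm.trans hgy) hfg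
  have hleft : x * f x ≤ x * g x :=
    mul_le_mul_of_nonneg_left (hfg x (left_mem_Icc.2 hxy)) hx0
  rw [surplus_sub_surplus hfx hfy, surplus_sub_surplus hgx hgy, hfg_right]
  linarith

theorem strictConvexOn_surplus (hS_nonneg : S ⊆ Ici 0) (hS_zero : 0 ∈ S)
    (hconv : ConvexOn ℝ S c) (hmono : StrictMonoOn c S) :
    StrictConvexOn ℝ S (surplus c) := by
  refine strictConvexOn_of_slope_strict_mono_adjacent hconv.1 fun {x y z} hx hz hxy hyz ↦ ?_
  have hy : y ∈ S := hconv.1.ordConnected.out hx hz ⟨hxy.le, hyz.le⟩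
  have hint {s : ℝ} (hs : s ∈ S) : IntervalIntegrable c volume 0 s :=
    (hmono.monotoneOn.mono (hconv.1.ordConnected.uIcc_subset hS_zero hs)).intervalIntegrable
  let ℓ := secantLine c y z
  have hint_ℓ (s : ℝ) : IntervalIntegrable ℓ volume 0 s :=
    (continuous_secantLine c y z).intervalIntegrable 0 s
  have hslope_pos : 0 < slope c y z := (slope_pos_iff hyz).2 (hmono hy hz hyz)
  have hxy_le : surplus c y - surplus c x ≤ surplus ℓ y - surplus ℓ x :=
    surplus_sub_surplus_le_of_le (hS_nonneg hx) hxy.le (hint_ℓ x) (hint_ℓ y) (hint hx) (hint hy)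
      (fun t ht ↦ secantLine_le_of_convexOn hconv
        (hconv.1.ordConnected.out hx hy ht) hz ht.2 hyz)
      (secantLine_left c y z)
  have hyz_le : surplus ℓ z - surplus ℓ y ≤ surplus c z - surplus c y :=
    surplus_sub_surplus_le_of_le (hS_nonneg hy) hyz.le (hint hy) (hint hz) (hint_ℓ y) (hint_ℓ z)
      (fun t ht ↦ le_secantLine_of_convexOn hconv hy hz ht) (secantLine_right c y z).symm
  calc (surplus c y - surplus c x) / (y - x)
      ≤ (surplus ℓ y - surplus ℓ x) / (y - x) :=
        div_le_div_of_nonneg_right hxy_le (sub_pos.2 hxy).le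
    _ = slope c y z * ((x + y) / 2) := by
        rw [← slope_def_field, slope_surplus_secantLine hxy.ne]
    _ < slope c y z * ((y + z) / 2) := mul_lt_mul_of_pos_left (by linarith) hslope_pos
    _ = (surplus ℓ z - surplus ℓ y) / (z - y) := by
        rw [← slope_def_field, slope_surplus_secantLine hyz.ne]
    _ ≤ (surplus c z - surplus c y) / (z - y) :=
        div_le_div_of_nonneg_right hyz_le (sub_pos.2 hyz).le

end Surplus

/-- The modified cost `ĉ` of the cost function `c` with parameter `K > 0`, whose total over all
suppliers the equilibrium supply profile minimizes. -/
noncomputable def modifiedCost (K : ℝ) (c : ℝ → ℝ) (s : ℝ) : ℝ :=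
  (1 + s / K) * c s - (1 / K) * ∫ x in (0 : ℝ)..s, c x

lemma modifiedCost_eq_add_smul_surplus (K : ℝ) (c : ℝ → ℝ) (s : ℝ) :
    modifiedCost K c s = c s + K⁻¹ • surplus c s := by
  rw [modifiedCost, surplus, smul_eq_mul]
  ring

theorem strictConvexOn_modifiedCost {K : ℝ} {c : ℝ → ℝ} {S : Set ℝ} (hK : 0 < K)
    (hS_nonneg : S ⊆ Ici 0) (hS_zero : 0 ∈ S) (hconv : ConvexOn ℝ S c)
    (hmono : StrictMonoOn c S) : StrictConvexOn ℝ S (modifiedCost K c) := by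
  have hsurplus := strictConvexOn_surplus hS_nonneg hS_zero hconv hmono
  exact (hconv.add_strictConvexOn (strictConvexOn_const_smul (inv_pos.2 hK) hsurplus)).congr
    fun s _ ↦ (modifiedCost_eq_add_smul_surplus K c s).symm

theorem modified_cost_min_unique_general {ι : Type*} [Fintype ι] {K : ℝ} (hK : 0 < K)
    {c : ι → ℝ → ℝ} (hconv : ∀ i, ConvexOn ℝ (Ici 0) (c i))
    (hmono : ∀ i, StrictMonoOn (c i) (Ici 0))
    {F : Set (ι → ℝ)} (hF_conv : Convex ℝ F) (hF_nonneg : ∀ s ∈ F, ∀ i, 0 ≤ s i)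
    {s s' : ι → ℝ} (hs : s ∈ F) (hs' : s' ∈ F)
    (hmin : IsMinOn (fun t ↦ ∑ i, modifiedCost K (c i) (t i)) F s)
    (hmin' : IsMinOn (fun t ↦ ∑ i, modifiedCost K (c i) (t i)) F s') :
    s = s' := by
  have htotal : StrictConvexOn ℝ (univ.pi fun _ ↦ Ici 0)
      fun t : ι → ℝ ↦ ∑ i, modifiedCost K (c i) (t i) :=
    strictConvexOn_sum_apply fun i ↦
      strictConvexOn_modifiedCost hK Subset.rfl self_mem_Ici (hconv i) (hmono i)
  have hF_subset : F ⊆ univ.pi fun _ ↦ Ici 0 := fun t ht i _ ↦ hF_nonneg t ht i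
  exact (htotal.subset hF_subset hF_conv).eq_of_isMinOn hmin hmin' hs hs'

/-- Uniqueness of the minimizer of the total modified cost over a convex feasible set
`F ⊆ [0, ∞)^N`: if `s` and `s'` both minimize `∑ n, ĉ n (s n)` over `F`, then `s = s'`. -/
theorem modified_cost_min_unique
    (N : ℕ) (hN : 1 ≤ N) (K : ℝ) (hK : 0 < K)
    (c : Fin N → ℝ → ℝ)
    (hconv : ∀ n, ConvexOn ℝ (Set.Ici (0 : ℝ)) (c n))
    (hmono : ∀ n, StrictMonoOn (c n) (Set.Ici (0 : ℝ)))
    (hdiff : ∀ n, DifferentiableOn ℝ (c n) (Set.Ici (0 : ℝ)))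
    (chat : Fin N → ℝ → ℝ)
    (hchat : ∀ n s, chat n s = (1 + s / K) * c n s - (1 / K) * ∫ x in (0:ℝ)..s, c n x)
    (F : Set (Fin N → ℝ))
    (hFconv : Convex ℝ F)
    (hFpos : ∀ s ∈ F, ∀ n, 0 ≤ s n)
    (s s' : Fin N → ℝ) (hs : s ∈ F) (hs' : s' ∈ F)
    (hmin : ∀ t ∈ F, ∑ n, chat n (s n) ≤ ∑ n, chat n (t n))
    (hmin' : ∀ t ∈ F, ∑ n, chat n (s' n) ≤ ∑ n, chat n (t n)) :
    s = s' := by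
  obtain rfl : chat = fun n ↦ modifiedCost K (c n) := funext₂ hchat
  exact modified_cost_min_unique_general hK hconv hmono hFconv hFpos hs hs' hmin hmin'
end

section
/- Let E be a finite set with at least two elements, and for each e ∈ E let f_e ≥ 0, B_e > 0 and p_e ∈ ℝ. Suppose |p_e| ≤ f_e for every e ∈ E and ∑_{e ∈ E} p_e / B_e = 0. For each e ∈ E define the effective flow limit f̂_e = min{ f_e, B_e · ∑_{e′ ∈ E, e′ ≠ e} f_{e′} / B_{e′} }. Then for any two distinct e₁, e₂ ∈ E, p_{e₁} + p_{e₂} ≤ f̂_{e₁} + f̂_{e₂}. -/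
theorem abs_le_sum_erase_abs_of_sum_eq_zero {ι G : Type*} [DecidableEq ι]
    [AddCommGroup G] [LinearOrder G] [IsOrderedAddMonoid G] {s : Finset ι} {x : ι → G} {i : ι}
    (hi : i ∈ s) (hx : ∑ j ∈ s, x j = 0) : |x i| ≤ ∑ j ∈ s.erase i, |x j| := by
  have x_eq_neg_rest : x i = -∑ j ∈ s.erase i, x j :=
    eq_neg_of_add_eq_zero_left ((Finset.add_sum_erase s x hi).trans hx)
  rw [x_eq_neg_rest, abs_neg]
  exact Finset.abs_sum_le_sum_abs _ _

section EffectiveFlowLimit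

variable {ι K : Type*} [DecidableEq ι] [Field K] [LinearOrder K]

/-- The effective flow limit `f̂ e` of the line `e` on the cycle with set of lines `E`, flow limits
`f` and admittances `B`: the largest flow on `e` that respects the limit of `e` itself and whose
voltage-angle difference `f̂ e / B e` can be balanced by the other lines within their limits.
The orientation of the cycle is encoded in the signs of the flows, so `E` is a bare finset. -/
def effectiveFlowLimit (E : Finset ι) (f B : ι → K) (e : ι) : K :=
  min (f e) (B e * ∑ e' ∈ E.erase e, f e' / B e')

variable [IsStrictOrderedRing K] {E : Finset ι} {f B p : ι → K}

theorem abs_flow_le_mul_sum_erase_div {e : ι} (he : e ∈ E) (hB : ∀ e ∈ E, 0 < B e)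
    (hp : ∀ e ∈ E, |p e| ≤ f e) (hcycle : ∑ e ∈ E, p e / B e = 0) :
    |p e| ≤ B e * ∑ e' ∈ E.erase e, f e' / B e' := by
  have abs_angle_le : ∀ e' ∈ E.erase e, |p e' / B e'| ≤ f e' / B e' := fun e' he' ↦ by
    have he'E := Finset.mem_of_mem_erase he'
    rw [abs_div, abs_of_pos (hB e' he'E)]
    exact div_le_div_of_nonneg_right (hp e' he'E) (hB e' he'E).le
  rw [← div_le_iff₀' (hB e he)]
  calc |p e| / B e = |p e / B e| := by rw [abs_div, abs_of_pos (hB e he)]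
    _ ≤ ∑ e' ∈ E.erase e, |p e' / B e'| := abs_le_sum_erase_abs_of_sum_eq_zero he hcycle
    _ ≤ ∑ e' ∈ E.erase e, f e' / B e' := Finset.sum_le_sum abs_angle_le

theorem abs_flow_le_effectiveFlowLimit {e : ι} (he : e ∈ E) (hB : ∀ e ∈ E, 0 < B e)
    (hp : ∀ e ∈ E, |p e| ≤ f e) (hcycle : ∑ e ∈ E, p e / B e = 0) :
    |p e| ≤ effectiveFlowLimit E f B e :=
  le_min (hp e he) (abs_flow_le_mul_sum_erase_div he hB hp hcycle)

theorem two_line_effective_flow_limit_general {e₁ e₂ : ι} (he₁ : e₁ ∈ E) (he₂ : e₂ ∈ E)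
    (hB : ∀ e ∈ E, 0 < B e) (hp : ∀ e ∈ E, |p e| ≤ f e) (hcycle : ∑ e ∈ E, p e / B e = 0) :
    |p e₁| + |p e₂| ≤ effectiveFlowLimit E f B e₁ + effectiveFlowLimit E f B e₂ :=
  add_le_add (abs_flow_le_effectiveFlowLimit he₁ hB hp hcycle)
    (abs_flow_le_effectiveFlowLimit he₂ hB hp hcycle)

end EffectiveFlowLimit

/-- Bound on the combined flow on two lines of a cycle by their effective flow limits: if
`|p e| ≤ f e` on every edge of the cycle and `∑ e, p e / B e = 0` with admittances `B e > 0`,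
and `f̂ e = min (f e) (B e · ∑_{e' ≠ e} f e' / B e')` denotes the effective flow limit, then
for any two distinct edges `e₁, e₂` of the cycle, `p e₁ + p e₂ ≤ f̂ e₁ + f̂ e₂`. -/
theorem two_line_effective_flow_limit
    {ι : Type*} [DecidableEq ι] (E : Finset ι) (hE : 2 ≤ E.card)
    (f B p : ι → ℝ)
    (hf : ∀ e ∈ E, 0 ≤ f e) (hB : ∀ e ∈ E, 0 < B e)
    (hp : ∀ e ∈ E, |p e| ≤ f e)
    (hcycle : ∑ e ∈ E, p e / B e = 0)
    (fhat : ι → ℝ)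
    (hfhat : ∀ e ∈ E, fhat e = min (f e) (B e * ∑ e' ∈ E.erase e, f e' / B e')) :
    ∀ e₁ ∈ E, ∀ e₂ ∈ E, e₁ ≠ e₂ → p e₁ + p e₂ ≤ fhat e₁ + fhat e₂ := by
  intro e₁ he₁ e₂ he₂ _
  rw [hfhat e₁ he₁, hfhat e₂ he₂]
  exact (add_le_add (le_abs_self _) (le_abs_self _)).trans
    (two_line_effective_flow_limit_general he₁ he₂ hB hp hcycle)
end
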